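/- Let A be a small abelian category and B an abelian category with all small limits. A functor E : A ⥤ B that preserves finite products is a sheaf for the single-epi topology on Aᵒᵖ if and only if E preserves finite limits (is left exact). Consequently, the full subcategory of Fun(A, B) consisting of finite-product-preserving sheaves coincides with the full subcategory of left exact functors A ⥤ B. -/

import Mathlib

/-!
STATEMENT 19: For a small abelian category `A` and an abelian category `B` with all
small limits, a finite-product-preserving functor `E : A ⥤ B` is a sheaf for the
single-epi topology on `Aᵒᵖ` if and only if it is left exact; consequently the
finite-product-preserving sheaves are exactly the left exact functors.
-/

open CategoryTheory CategoryTheory.Limits Opposite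

universe w v u

/-- A covering class on a category: a class of morphisms containing the identities,
closed under composition, such that morphisms of the class admit pullbacks along
arbitrary morphisms, and such that any pullback of a morphism of the class is again
in the class. -/
structure IsCoveringClass {I : Type u} [Category.{v} I] (F : MorphismProperty I) : Prop where
  id_mem : ∀ X : I, F (𝟙 X)
  comp_mem : ∀ {X Y Z : I} (f : X ⟶ Y) (g : Y ⟶ Z), F f → F g → F (f ≫ g)
  pullback_exists : ∀ {X Y Z : I} (f : X ⟶ Z) (g : Y ⟶ Z), F f → HasPullback f g
  pullback_mem : ∀ {P X Y Z : I} (fst : P ⟶ X) (snd : P ⟶ Y) (f : X ⟶ Z) (g : Y ⟶ Z),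
      F f → IsPullback fst snd f g → F snd

/-- The Grothendieck topology generated by a covering class: a sieve covers iff it
contains a morphism of the class. -/
def fTopology {I : Type u} [Category.{v} I] (F : MorphismProperty I)
    (hF : IsCoveringClass F) : GrothendieckTopology I where
  sieves X := {S | ∃ (Y : I) (f : Y ⟶ X), F f ∧ S.arrows f}
  top_mem' X := ⟨X, 𝟙 X, hF.id_mem X, trivial⟩
  pullback_stable' := by
    intro X Y S g hS
    obtain ⟨Z, f, hf, hSf⟩ := hS
    haveI : HasPullback f g := hF.pullback_exists f g hf
    refine ⟨pullback f g, pullback.snd f g,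
      hF.pullback_mem (pullback.fst f g) (pullback.snd f g) f g hf
        (IsPullback.of_hasPullback f g), ?_⟩
    show S.arrows (pullback.snd f g ≫ g)
    rw [← pullback.condition]
    exact S.downward_closed hSf _
  transitive' := by
    intro X S hS R hR
    obtain ⟨Z, f, hf, hSf⟩ := hS
    obtain ⟨W, g, hg, hRg⟩ := hR hSf
    exact ⟨W, g ≫ f, hF.comp_mem g f hg hf, hRg⟩

/-- The class of morphisms of `Aᵒᵖ` corresponding to monomorphisms of `A`. -/
def monoClass (A : Type u) [Category.{v} A] : MorphismProperty Aᵒᵖ :=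
  fun _ _ f => Mono f.unop

theorem monoClass_isCoveringClass (A : Type u) [Category.{v} A] [Abelian A] :
    IsCoveringClass (monoClass A) where
  id_mem X := by
    show Mono (𝟙 X).unop
    rw [unop_id]
    infer_instance
  comp_mem f g hf hg := by
    show Mono (f ≫ g).unop
    rw [unop_comp]
    exact @mono_comp _ _ _ _ _ _ hg _ hf
  pullback_exists f g _ := inferInstance
  pullback_mem fst snd f g hf sq := by
    haveI : Mono f.unop := hf
    have h := sq.unop
    show Mono snd.unop
    have h1 : snd.unop ≫ h.isoPushout.hom = pushout.inl g.unop f.unop :=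
      h.inl_isoPushout_hom
    have : snd.unop = pushout.inl g.unop f.unop ≫ h.isoPushout.inv := by
      rw [← h1]; simp
    rw [this]
    haveI : Mono (pushout.inl g.unop f.unop) :=
      CategoryTheory.Abelian.mono_pushout_of_mono_g g.unop f.unop
    exact mono_comp _ _

/-- The single-epi topology on `Aᵒᵖ` for a small abelian category `A`: a sieve on `X`
is covering iff it contains a morphism of `Aᵒᵖ` corresponding to a monomorphism
`X → Y` of `A`. -/
def singleEpiTopology (A : Type u) [SmallCategory A] [Abelian A] :
    GrothendieckTopology Aᵒᵖ :=
  fTopology (monoClass A) (monoClass_isCoveringClass A)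

/-!
A covering sieve contains the sieve generated by a single monomorphism `f : X ⟶ Y`, and these
sieves are stable under pullback, so only they matter for the sheaf condition. A compatible family
for `f` is a morphism `t : T ⟶ E.obj Y` with `t ≫ E.map p = t ≫ E.map q` whenever `f ≫ p = f ≫ q`.
When `E` is additive, replacing `p` and `q` by `p - q` and `0` turns this into
`t ≫ E.map (cokernel.π f) = 0`, so `E` is a sheaf exactly when `E.map f` is a kernel of
`E.map (cokernel.π f)` for every monomorphism `f`. Such an `E` preserves monomorphisms, and
factoring `g` as its coimage followed by a monomorphism shows that it preserves the kernel of every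
morphism `g`.
-/

section CoveringClass

variable {I : Type*} [Category* I] {F : MorphismProperty I}

theorem IsCoveringClass.exists_pullback_generate_singleton (hF : IsCoveringClass F)
    {X Y Z : I} {f : Y ⟶ X} (hf : F f) (g : Z ⟶ X) :
    ∃ (W : I) (f' : W ⟶ Z), F f' ∧
      (Sieve.generate (Presieve.singleton f)).pullback g =
        Sieve.generate (Presieve.singleton f') := by
  have : HasPullback f g := hF.pullback_exists f g hf
  refine ⟨pullback f g, pullback.snd f g,
    hF.pullback_mem _ _ f g hf (IsPullback.of_hasPullback f g), ?_⟩
  rw [← Presieve.pullback_singleton, Sieve.pullbackArrows_comm]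

theorem presieve_isSheaf_fTopology_iff (hF : IsCoveringClass F) (P : Iᵒᵖ ⥤ Type*) :
    Presieve.IsSheaf (fTopology F hF) P ↔
      ∀ ⦃X Y : I⦄ (f : Y ⟶ X), F f → (Presieve.singleton f).IsSheafFor P := by
  constructor
  · intro hP X Y f hf
    rw [Presieve.isSheafFor_iff_generate]
    exact hP _ ⟨Y, f, hf, Sieve.le_generate _ _ _ (Presieve.singleton_self f)⟩
  · rintro hP X S ⟨Y, f, hf, hfS⟩
    have generate_le : Sieve.generate (Presieve.singleton f) ≤ S := by
      rw [Sieve.generate_le_iff]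
      rintro _ _ ⟨⟩
      exact hfS
    refine Presieve.isSheafFor_subsieve P generate_le fun Z g ↦ ?_
    obtain ⟨W, f', hf', pullback_eq⟩ := hF.exists_pullback_generate_singleton hf g
    rw [pullback_eq, ← Presieve.isSheafFor_iff_generate]
    exact hP f' hf'

theorem presheaf_isSheaf_fTopology_iff {D : Type*} [Category* D] (hF : IsCoveringClass F)
    (P : Iᵒᵖ ⥤ D) :
    Presheaf.IsSheaf (fTopology F hF) P ↔
      ∀ ⦃X Y : I⦄ (f : Y ⟶ X), F f →
        ∀ T : D, (Presieve.singleton f).IsSheafFor (P ⋙ coyoneda.obj (op T)) := by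
  simp only [Presheaf.IsSheaf, presieve_isSheaf_fTopology_iff]
  exact ⟨fun h X Y f hf T ↦ h T f hf, fun h T X Y f hf ↦ h f hf T⟩

end CoveringClass

section Preadditive

variable {C D : Type*} [Category* C] [Preadditive C] [Category* D] [Preadditive D]

theorem additive_of_preservesFiniteProducts [HasFiniteProducts C] (E : C ⥤ D)
    [PreservesFiniteProducts E] : E.Additive := by
  have isZero_map : IsZero (E.obj (⊤_ C)) :=
    (terminalIsTerminal.isTerminalObj E _).isZero
  have : E.PreservesZeroMorphisms :=
    ⟨fun X Y ↦ by
      rw [← zero_comp (X := X) (f := (0 : ⊤_ C ⟶ Y)), E.map_comp, isZero_map.eq_of_src (E.map 0) 0,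
        comp_zero]⟩
  exact E.additive_of_preserves_binary_products

variable (E : C ⥤ D) [E.Additive] {X Y : C} (f : X ⟶ Y) [HasCokernel f]

theorem comp_map_cokernel_π_eq_zero_iff {T : D} (t : T ⟶ E.obj Y) :
    t ≫ E.map (cokernel.π f) = 0 ↔
      ∀ ⦃Z : C⦄ (p q : Y ⟶ Z), f ≫ p = f ≫ q → t ≫ E.map p = t ≫ E.map q := by
  constructor
  · intro ht Z p q hpq
    have hsub : f ≫ (p - q) = 0 := by rw [Preadditive.comp_sub, hpq, sub_self]
    rw [← sub_eq_zero, ← Preadditive.comp_sub, ← E.map_sub, ← cokernel.π_desc f (p - q) hsub,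
      E.map_comp, ← Category.assoc, ht, zero_comp]
  · intro ht
    simpa using ht (cokernel.π f) 0 (by simp)

theorem isSheafFor_singleton_op_iff_isLimit :
    (∀ T : D, (Presieve.singleton f.op).IsSheafFor
        ((unopUnop C ⋙ E) ⋙ coyoneda.obj (op T))) ↔
      Nonempty (IsLimit ((KernelFork.ofι f (cokernel.condition f)).map E)) := by
  have existsUnique_lift_iff (T : D) :
      (Presieve.singleton f.op).IsSheafFor ((unopUnop C ⋙ E) ⋙ coyoneda.obj (op T)) ↔
        ∀ t : T ⟶ E.obj Y, t ≫ E.map (cokernel.π f) = 0 → ∃! s, s ≫ E.map f = t := by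
    rw [Presieve.isSheafFor_singleton]
    refine forall_congr' fun t ↦ imp_congr_left ?_
    refine Iff.trans ?_ (comp_map_cokernel_π_eq_zero_iff E f t).symm
    exact ⟨fun h Z p q hpq ↦ h p.op q.op (Quiver.Hom.unop_inj hpq),
      fun h Z p q hpq ↦ h p.unop q.unop (Quiver.Hom.op_inj hpq)⟩
  simp only [existsUnique_lift_iff]
  exact ⟨fun h ↦ ⟨Fork.IsLimit.ofExistsUnique fun s ↦ h _ s.ι (KernelFork.condition s)⟩,
    fun ⟨h⟩ _ t ht ↦ Fork.IsLimit.existsUnique h t (by simpa using ht)⟩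

end Preadditive

section Abelian

variable {A : Type*} [Category* A] [Abelian A] {B : Type*} [Category* B] [Preadditive B]

theorem isSheaf_fTopology_monoClass_iff (E : A ⥤ B) [E.Additive] :
    Presheaf.IsSheaf (fTopology (monoClass A) (monoClass_isCoveringClass A)) (unopUnop A ⋙ E) ↔
      ∀ ⦃X Y : A⦄ (f : X ⟶ Y) [Mono f],
        Nonempty (IsLimit ((KernelFork.ofι f (cokernel.condition f)).map E)) := by
  simp only [presheaf_isSheaf_fTopology_iff, ← isSheafFor_singleton_op_iff_isLimit]
  exact ⟨fun h X Y f hf ↦ h f.op hf, fun h X Y f hf ↦ @h _ _ f.unop hf⟩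

theorem preservesFiniteLimits_iff_isLimit_map_mono (E : A ⥤ B) [E.Additive] :
    PreservesFiniteLimits E ↔ ∀ ⦃X Y : A⦄ (f : X ⟶ Y) [Mono f],
      Nonempty (IsLimit ((KernelFork.ofι f (cokernel.condition f)).map E)) := by
  constructor
  · intro _ X Y f _
    exact ⟨KernelFork.mapIsLimit _
      (Abelian.monoIsKernelOfCokernel _ (cokernelIsCokernel f)) E⟩
  · intro h
    have map_mono {X Y : A} (f : X ⟶ Y) [Mono f] : Mono (E.map f) := Fork.IsLimit.mono (h f).some
    have preservesKernel {X Y : A} (g : X ⟶ Y) : PreservesLimit (parallelPair g 0) E := by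
      have := map_mono (Abelian.factorThruCoimage g)
      have map_fac : E.map g = E.map (cokernel.π (kernel.ι g)) ≫
          E.map (Abelian.factorThruCoimage g) := by
        rw [← E.map_comp]
        exact congrArg E.map (Abelian.coimage.fac g).symm
      exact preservesLimit_of_preserves_limit_cone (kernelIsKernel g)
        ((isLimitMapConeForkEquiv' E (kernel.condition g)).symm
          (isKernelCompMono (h (kernel.ι g)).some (E.map (Abelian.factorThruCoimage g)) map_fac))
    have := E.preservesEqualizers_of_preservesKernels
    exact preservesFiniteLimits_of_preservesEqualizers_and_finiteProducts E

theorem isSheaf_fTopology_monoClass_iff_preservesFiniteLimits (E : A ⥤ B)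
    [PreservesFiniteProducts E] :
    Presheaf.IsSheaf (fTopology (monoClass A) (monoClass_isCoveringClass A)) (unopUnop A ⋙ E) ↔
      PreservesFiniteLimits E := by
  have : E.Additive := additive_of_preservesFiniteProducts E
  rw [isSheaf_fTopology_monoClass_iff, preservesFiniteLimits_iff_isLimit_map_mono]

end Abelian

theorem stmt_19_general {A : Type*} [Category* A] [Abelian A]
    {B : Type*} [Category* B] [Preadditive B] (E : A ⥤ B) (hE : PreservesFiniteProducts E) :
    (Presheaf.IsSheaf (fTopology (monoClass A) (monoClass_isCoveringClass A)) (unopUnop A ⋙ E) ↔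
      PreservesFiniteLimits E)
    ∧ {E' : A ⥤ B | PreservesFiniteProducts E' ∧ Presheaf.IsSheaf
          (fTopology (monoClass A) (monoClass_isCoveringClass A)) (unopUnop A ⋙ E')}
      = {E' : A ⥤ B | PreservesFiniteLimits E'} := by
  refine ⟨isSheaf_fTopology_monoClass_iff_preservesFiniteLimits E, Set.ext fun E' ↦ ⟨?_, ?_⟩⟩
  · rintro ⟨_, hsheaf⟩
    exact (isSheaf_fTopology_monoClass_iff_preservesFiniteLimits E').1 hsheaf
  · intro (hlex : PreservesFiniteLimits E')
    exact ⟨inferInstance, (isSheaf_fTopology_monoClass_iff_preservesFiniteLimits E').2 hlex⟩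

theorem stmt_19 {A : Type u} [SmallCategory A] [Abelian A]
    {B : Type w} [Category.{v} B] [Abelian B] [HasLimitsOfSize.{u, u} B]
    (E : A ⥤ B) (hE : PreservesFiniteProducts E) :
    (Presheaf.IsSheaf (singleEpiTopology A) (unopUnop A ⋙ E) ↔ PreservesFiniteLimits E)
    ∧ {E' : A ⥤ B | PreservesFiniteProducts E' ∧
        Presheaf.IsSheaf (singleEpiTopology A) (unopUnop A ⋙ E')}
      = {E' : A ⥤ B | PreservesFiniteLimits E'} :=
  stmt_19_general E hE
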